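/- arXiv:1712.03393 — 5 statements merged into one kernel-verified Lean document; each statement's English description precedes it below -/
import Mathlib

section
/- Let n ≥ 1 and let Z be an n×n real matrix such that every row sum and every column sum of Z equals l. Set N = Z - (l/n)•J, where J is the n×n all-ones matrix. If N is nilpotent with N^k = 0, then Z^k = (l^k/n)•J, a constant matrix. -/
open Matrix BigOperators

/-!
The averaging matrix `E = (1/n) • J` is idempotent, and `Z * E = E * Z = l • E` because `Z` is
doubly affine. Hence `N = Z - l • E = Z * (1 - E)` with `1 - E` an idempotent commuting with `Z`, so
`N ^ k = 0` forces `Z ^ k * (1 - E) = 0`, that is, `Z ^ k = Z ^ k * E = l ^ k • E`.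
-/

theorem pow_eq_pow_mul_of_sub_mul_pow_eq_zero {R : Type*} [Ring R] {z e : R} {k : ℕ}
    (he : IsIdempotentElem e) (hze : Commute z e) (hk : (z - z * e) ^ k = 0) :
    z ^ k = z ^ k * e := by
  have hcomm : Commute z (1 - e) := (Commute.one_right z).sub_right hze
  have hzero : z ^ k * (1 - e) = 0 :=
    -- The extra factor `1 - e` treats `k = 0` on the same footing as `k > 0`.
    calc z ^ k * (1 - e) = z ^ k * (1 - e) ^ (k + 1) := by rw [he.one_sub.pow_succ_eq]
      _ = (z * (1 - e)) ^ k * (1 - e) := by rw [hcomm.mul_pow, pow_succ, mul_assoc]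
      _ = (z - z * e) ^ k * (1 - e) := by rw [mul_one_sub z e]
      _ = 0 := by rw [hk, zero_mul]
  rwa [mul_one_sub, sub_eq_zero] at hzero

theorem row_sum_mul {m n p R : Type*} [Fintype n] [Fintype p] [NonUnitalNonAssocSemiring R]
    {A : Matrix m n R} {B : Matrix n p R} {a b : R} (hA : ∀ i, ∑ j, A i j = a)
    (hB : ∀ i, ∑ j, B i j = b) (i : m) : ∑ j, (A * B) i j = a * b := by
  simp only [Matrix.mul_apply]
  rw [Finset.sum_comm]
  simp only [← Finset.mul_sum, hB, ← Finset.sum_mul, hA]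

theorem row_sum_pow {ι R : Type*} [Fintype ι] [DecidableEq ι] [Semiring R] {A : Matrix ι ι R}
    {a : R} (hA : ∀ i, ∑ j, A i j = a) (k : ℕ) : ∀ i, ∑ j, (A ^ k) i j = a ^ k := by
  induction k with
  | zero => simp [Matrix.one_apply]
  | succ k ih => simpa only [pow_succ] using row_sum_mul ih hA

/-- The square matrix all of whose entries are `1 / |ι|`, i.e. `(1/n) • J` for the all-ones matrix
`J`; it replaces a vector by its mean. It is zero when `|ι| = 0` in `K`. -/
def averagingMatrix (ι K : Type*) [Fintype ι] [DivisionSemiring K] : Matrix ι ι K :=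
  Matrix.of fun _ _ => (Fintype.card ι : K)⁻¹

section AveragingMatrix

variable {ι K : Type*} [Fintype ι] [DivisionSemiring K]

theorem averagingMatrix_apply (i j : ι) :
    averagingMatrix ι K i j = (Fintype.card ι : K)⁻¹ := rfl

theorem smul_averagingMatrix (a : K) :
    a • averagingMatrix ι K = (a / Fintype.card ι) • Matrix.of fun _ _ => (1 : K) := by
  ext i j
  simp [averagingMatrix_apply, div_eq_mul_inv]

theorem mul_averagingMatrix {A : Matrix ι ι K} {a : K} (hA : ∀ i, ∑ j, A i j = a) :
    A * averagingMatrix ι K = a • averagingMatrix ι K := by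
  ext i j
  simp only [Matrix.mul_apply, averagingMatrix_apply, ← Finset.sum_mul, hA, Matrix.smul_apply,
    smul_eq_mul]

theorem averagingMatrix_mul {A : Matrix ι ι K} {a : K} (hA : ∀ j, ∑ i, A i j = a) :
    averagingMatrix ι K * A = a • averagingMatrix ι K := by
  ext i j
  simp only [Matrix.mul_apply, averagingMatrix_apply, ← Finset.mul_sum, hA, Matrix.smul_apply,
    smul_eq_mul]
  exact (Nat.cast_commute (Fintype.card ι) a).inv_left₀

theorem isIdempotentElem_averagingMatrix (hι : (Fintype.card ι : K) ≠ 0) :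
    IsIdempotentElem (averagingMatrix ι K) := by
  have row_sum (i : ι) : ∑ j, averagingMatrix ι K i j = 1 := by
    simp [averagingMatrix_apply, hι]
  exact (mul_averagingMatrix row_sum).trans (one_smul K _)

end AveragingMatrix

theorem pow_eq_constant_of_nilpotent_part_general {ι K : Type*} [Fintype ι] [DecidableEq ι]
    [DivisionRing K] (hι : (Fintype.card ι : K) ≠ 0) (Z : Matrix ι ι K) (l : K) (k : ℕ)
    (hrow : ∀ i, ∑ j, Z i j = l) (hcol : ∀ j, ∑ i, Z i j = l)
    (hN : (Z - (l / Fintype.card ι) • Matrix.of fun _ _ => (1 : K)) ^ k = 0) :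
    Z ^ k = (l ^ k / Fintype.card ι) • Matrix.of fun _ _ => (1 : K) := by
  have hZE : Z * averagingMatrix ι K = l • averagingMatrix ι K := mul_averagingMatrix hrow
  have hcomm : Commute Z (averagingMatrix ι K) := hZE.trans (averagingMatrix_mul hcol).symm
  rw [← smul_averagingMatrix, ← hZE] at hN
  calc Z ^ k = Z ^ k * averagingMatrix ι K :=
        pow_eq_pow_mul_of_sub_mul_pow_eq_zero (isIdempotentElem_averagingMatrix hι) hcomm hN
    _ = l ^ k • averagingMatrix ι K := mul_averagingMatrix (row_sum_pow hrow k)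
    _ = (l ^ k / Fintype.card ι) • Matrix.of fun _ _ => (1 : K) := smul_averagingMatrix _

/-- If `Z` is doubly affine with magic constant `l` and
`N = Z - (l/n) • J` satisfies `N ^ k = 0`, then `Z ^ k = (l^k / n) • J`. -/
theorem pow_eq_constant_of_nilpotent_part {n : ℕ} (hn : 1 ≤ n)
    (Z : Matrix (Fin n) (Fin n) ℝ) (l : ℝ) (k : ℕ)
    (hrow : ∀ i, ∑ j, Z i j = l) (hcol : ∀ j, ∑ i, Z i j = l)
    (J : Matrix (Fin n) (Fin n) ℝ) (hJ : J = Matrix.of fun _ _ => (1 : ℝ))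
    (hN : (Z - (l / n) • J) ^ k = 0) :
    Z ^ k = (l ^ k / n) • J := by
  subst hJ
  simpa using pow_eq_constant_of_nilpotent_part_general
    (by simpa using Nat.one_le_iff_ne_zero.mp hn) Z l k hrow hcol (by simpa using hN)
end

section
/- Let n ≥ 1 and let Z be an n×n real matrix such that every row sum and every column sum of Z equals l, and suppose Z - (l/n)•J is nilpotent with (Z - (l/n)•J)^k = 0, where J is the n×n all-ones matrix. Then for every integer p ≥ k one has Z^p = (l^p/n)•J; that is, all powers of Z from the k-th onward are constant matrices. -/
open Matrix BigOperators

/-!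
Write `Z = N + C` with `C` the constant matrix having the same row and column sums as `Z`. Then all
row and column sums of `N` vanish, so `N * C = C * N = 0` and `Z ^ p = N ^ p + C ^ p` for `p ≥ 1`:
once `N ^ p = 0`, only the constant matrix `C ^ p` remains.
-/

theorem add_pow_succ_of_mul_eq_zero {R : Type*} [Semiring R] {a b : R} (hab : a * b = 0)
    (hba : b * a = 0) (m : ℕ) : (a + b) ^ (m + 1) = a ^ (m + 1) + b ^ (m + 1) := by
  induction m with
  | zero => simp only [zero_add, pow_one]
  | succ m ih =>
    have ha : a ^ (m + 1) * b = 0 := by rw [pow_succ, mul_assoc, hab, mul_zero]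
    have hb : b ^ (m + 1) * a = 0 := by rw [pow_succ, mul_assoc, hba, mul_zero]
    rw [pow_succ, ih, add_mul, mul_add, mul_add, ha, hb, add_zero, zero_add, ← pow_succ,
      ← pow_succ]

section ConstMatrix

variable {m n o R : Type*}

theorem smul_of_one_eq_const [MulOneClass R] (c : R) :
    c • (of fun (_ : m) (_ : n) => (1 : R)) = of fun _ _ => c := by
  ext i j
  simp only [Matrix.smul_apply, of_apply, smul_eq_mul, mul_one]

theorem mul_const_of_row_sum_eq [Fintype n] [NonUnitalNonAssocSemiring R] {A : Matrix m n R}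
    {l : R} (hrow : ∀ i, ∑ j, A i j = l) (c : R) :
    A * (of fun (_ : n) (_ : o) => c) = of fun _ _ => l * c := by
  ext i j
  simp only [mul_apply, of_apply, ← Finset.sum_mul, hrow]

theorem const_mul_of_col_sum_eq [Fintype m] [NonUnitalNonAssocSemiring R] {A : Matrix m n R}
    {l : R} (hcol : ∀ j, ∑ i, A i j = l) (c : R) :
    (of fun (_ : o) (_ : m) => c) * A = of fun _ _ => c * l := by
  ext i j
  simp only [mul_apply, of_apply, ← Finset.mul_sum, hcol]

theorem pow_mul_const_of_row_sum_eq [Fintype n] [DecidableEq n] [Semiring R] {A : Matrix n n R}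
    {l : R} (hrow : ∀ i, ∑ j, A i j = l) (p : ℕ) (c : R) :
    A ^ p * (of fun (_ : n) (_ : o) => c) = of fun _ _ => l ^ p * c := by
  induction p with
  | zero => simp only [pow_zero, Matrix.one_mul, one_mul]
  | succ p ih =>
    rw [pow_succ', Matrix.mul_assoc, ih, mul_const_of_row_sum_eq hrow]
    simp only [pow_succ', mul_assoc]

end ConstMatrix

/-- A doubly-affine matrix with magic constant `l`: every row sum and every column sum is `l`. -/
structure IsDoublyAffine {ι R : Type*} [Fintype ι] [AddCommMonoid R] (Z : Matrix ι ι R) (l : R) :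
    Prop where
  row_sum : ∀ i, ∑ j, Z i j = l
  col_sum : ∀ j, ∑ i, Z i j = l

namespace IsDoublyAffine

variable {ι R : Type*} [Fintype ι]

theorem const [AddCommMonoid R] (c : R) :
    IsDoublyAffine (of fun _ _ : ι => c) (Fintype.card ι • c) where
  row_sum _ := Finset.sum_const c
  col_sum _ := Finset.sum_const c

theorem sub [AddCommGroup R] {Z W : Matrix ι ι R} {l m : R} (hZ : IsDoublyAffine Z l)
    (hW : IsDoublyAffine W m) : IsDoublyAffine (Z - W) (l - m) where
  row_sum i := by simp only [Matrix.sub_apply, Finset.sum_sub_distrib, hZ.row_sum, hW.row_sum]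
  col_sum j := by simp only [Matrix.sub_apply, Finset.sum_sub_distrib, hZ.col_sum, hW.col_sum]

theorem pow_succ_eq_add_const [DecidableEq ι] [Ring R] {Z : Matrix ι ι R} {c : R}
    (hZ : IsDoublyAffine Z (Fintype.card ι • c)) (m : ℕ) :
    Z ^ (m + 1) =
      (Z - of fun _ _ => c) ^ (m + 1) + of fun _ _ => (Fintype.card ι • c) ^ m * c := by
  set C : Matrix ι ι R := of fun _ _ => c
  have hN : IsDoublyAffine (Z - C) 0 := by simpa only [sub_self] using hZ.sub (const c)
  have hNC : (Z - C) * C = 0 := by rw [mul_const_of_row_sum_eq hN.row_sum, zero_mul]; rfl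
  have hCN : C * (Z - C) = 0 := by rw [const_mul_of_col_sum_eq hN.col_sum, mul_zero]; rfl
  calc Z ^ (m + 1) = (Z - C + C) ^ (m + 1) := by rw [sub_add_cancel]
    _ = (Z - C) ^ (m + 1) + C ^ (m + 1) := add_pow_succ_of_mul_eq_zero hNC hCN m
    _ = (Z - C) ^ (m + 1) + of fun _ _ => (Fintype.card ι • c) ^ m * c := by
      rw [pow_succ C, pow_mul_const_of_row_sum_eq (const c).row_sum]

end IsDoublyAffine

theorem pow_eq_constant_of_nilpotent_part_of_le_general {ι K : Type*} [Fintype ι] [DecidableEq ι]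
    [DivisionRing K] (hι : (Fintype.card ι : K) ≠ 0) {Z : Matrix ι ι K} {l : K} {k : ℕ}
    (hZ : IsDoublyAffine Z l)
    (hN : (Z - (l / Fintype.card ι) • of fun _ _ => (1 : K)) ^ k = 0) {p : ℕ} (hp : k ≤ p) :
    Z ^ p = (l ^ p / Fintype.card ι) • of fun _ _ => (1 : K) := by
  have hl : Fintype.card ι • (l / Fintype.card ι) = l := by
    rw [nsmul_eq_mul, (Nat.cast_commute _ _).eq, div_mul_cancel₀ l hι]
  rw [smul_of_one_eq_const] at hN ⊢
  have hNp := pow_eq_zero_of_le hp hN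
  cases p with
  | zero =>
    -- `N ^ 0 = 0` makes the matrix ring trivial.
    have := subsingleton_of_zero_eq_one ((pow_zero _).symm.trans hNp).symm
    exact Subsingleton.elim _ _
  | succ m =>
    rw [IsDoublyAffine.pow_succ_eq_add_const (hl.symm ▸ hZ), hNp, zero_add, hl, ← mul_div_assoc,
      ← pow_succ]

/-- If `Z` is doubly affine with magic constant `l` and
`(Z - (l/n) • J) ^ k = 0`, then for every `p ≥ k`, `Z ^ p = (l^p / n) • J`;
all powers from the `k`-th onward are constant matrices. -/
theorem pow_eq_constant_of_nilpotent_part_of_le {n : ℕ} (hn : 1 ≤ n)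
    (Z : Matrix (Fin n) (Fin n) ℝ) (l : ℝ) (k : ℕ)
    (hrow : ∀ i, ∑ j, Z i j = l) (hcol : ∀ j, ∑ i, Z i j = l)
    (J : Matrix (Fin n) (Fin n) ℝ) (hJ : J = Matrix.of fun _ _ => (1 : ℝ))
    (hN : (Z - (l / n) • J) ^ k = 0) :
    ∀ p, k ≤ p → Z ^ p = (l ^ p / n) • J := by
  subst hJ
  have hcard : (Fintype.card (Fin n) : ℝ) ≠ 0 := by rw [Fintype.card_fin]; positivity
  simpa only [Fintype.card_fin] using fun p =>
    pow_eq_constant_of_nilpotent_part_of_le_general (p := p) hcard ⟨hrow, hcol⟩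
      (by rwa [Fintype.card_fin])
end

section
/- Let N_A be an m×m real matrix with all row sums and column sums zero and N_A^k = 0, and let N_Q be an n×n real matrix with all row sums and column sums zero and N_Q^k = 0, where k ≥ 1. Let J_n and J_m denote the n×n and m×m all-ones matrices. Then (J_n ⊗ N_A + N_Q ⊗ J_m)^k = 0; that is, the sum is nilpotent of index at most k. -/
open Matrix BigOperators Kronecker

/-!
Put `x = J_n ⊗ N_A` and `y = N_Q ⊗ J_m`. Vanishing row and column sums of `N_Q` mean
`N_Q * J_n = 0` and `J_n * N_Q = 0`, so the mixed product rule gives `x * y = y * x = 0`. Hence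
`(x + y) ^ k = x ^ k + y ^ k` for `k ≥ 1`, and each power is a Kronecker product with a zero factor.
-/

section Semiring

variable {R : Type*} [Semiring R] {x y : R} {k : ℕ}

theorem add_pow_of_mul_eq_zero (hxy : x * y = 0) (hyx : y * x = 0) (hk : k ≠ 0) :
    (x + y) ^ k = x ^ k + y ^ k := by
  induction k, Nat.one_le_iff_ne_zero.mpr hk using Nat.le_induction with
  | base => simp only [pow_one]
  | succ k one_le_k ih =>
    have hk' : k ≠ 0 := Nat.one_le_iff_ne_zero.mp one_le_k
    have x_pow_mul : x ^ k * y = 0 := by rw [← pow_sub_one_mul hk', mul_assoc, hxy, mul_zero]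
    have y_pow_mul : y ^ k * x = 0 := by rw [← pow_sub_one_mul hk', mul_assoc, hyx, mul_zero]
    calc
      (x + y) ^ (k + 1) = (x ^ k + y ^ k) * (x + y) := by rw [pow_succ, ih hk']
      _ = x ^ k * x + y ^ k * y := by
        rw [add_mul, mul_add, mul_add, x_pow_mul, y_pow_mul, add_zero, zero_add]
      _ = x ^ (k + 1) + y ^ (k + 1) := by rw [pow_succ, pow_succ]

theorem add_pow_eq_zero_of_mul_eq_zero (hxy : x * y = 0) (hyx : y * x = 0)
    (hx : x ^ k = 0) (hy : y ^ k = 0) : (x + y) ^ k = 0 := by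
  obtain rfl | hk := eq_or_ne k 0
  · rwa [pow_zero] at hx ⊢
  · rw [add_pow_of_mul_eq_zero hxy hyx hk, hx, hy, add_zero]

end Semiring

section ZeroSums

variable {l m n R : Type*} [Fintype m] [NonUnitalNonAssocSemiring R]

theorem replicateCol_mul_eq_zero_of_sum_col_eq_zero {M : Matrix m n R} (v : l → R)
    (hM : ∀ j, ∑ i, M i j = 0) : replicateCol m v * M = 0 := by
  ext i j
  simp only [mul_apply, replicateCol_apply, ← Finset.mul_sum, hM, mul_zero, Matrix.zero_apply]

theorem mul_replicateRow_eq_zero_of_sum_row_eq_zero {M : Matrix l m R} (w : n → R)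
    (hM : ∀ i, ∑ j, M i j = 0) : M * replicateRow m w = 0 := by
  ext i j
  simp only [mul_apply, replicateRow_apply, ← Finset.sum_mul, hM, zero_mul, Matrix.zero_apply]

end ZeroSums

section Kronecker

theorem kronecker_mul_kronecker_eq_zero {l m n l' m' n' R : Type*} [Fintype m] [Fintype m']
    [CommSemiring R] {P : Matrix l m R} {Q : Matrix m n R}
    {A : Matrix l' m' R} {B : Matrix m' n' R} (h : P * Q = 0 ∨ A * B = 0) :
    (P ⊗ₖ A) * (Q ⊗ₖ B) = 0 := by
  rw [← mul_kronecker_mul]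
  obtain hPQ | hAB := h
  · rw [hPQ, zero_kronecker]
  · rw [hAB, kronecker_zero]

variable {m n R : Type*} [Fintype m] [DecidableEq m] [Fintype n] [DecidableEq n] [CommSemiring R]

theorem kronecker_pow (P : Matrix n n R) (A : Matrix m m R) (k : ℕ) :
    (P ⊗ₖ A) ^ k = (P ^ k) ⊗ₖ (A ^ k) := by
  induction k with
  | zero => simp only [pow_zero, one_kronecker_one]
  | succ k ih => rw [pow_succ, ih, ← mul_kronecker_mul, ← pow_succ, ← pow_succ]

theorem kronecker_sum_nilpotent_general {P Q : Matrix n n R} {A B : Matrix m m R} {k : ℕ}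
    (hPA_QB : P * Q = 0 ∨ A * B = 0) (hQB_PA : Q * P = 0 ∨ B * A = 0)
    (hA : A ^ k = 0) (hQ : Q ^ k = 0) : (P ⊗ₖ A + Q ⊗ₖ B) ^ k = 0 :=
  add_pow_eq_zero_of_mul_eq_zero
    (kronecker_mul_kronecker_eq_zero hPA_QB)
    (kronecker_mul_kronecker_eq_zero hQB_PA)
    (by rw [kronecker_pow, hA, kronecker_zero])
    (by rw [kronecker_pow, hQ, zero_kronecker])

end Kronecker

/-- If `N_A` and `N_Q` have all row and column sums zero and
`N_A ^ k = 0`, `N_Q ^ k = 0` with `k ≥ 1`, then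
`(J_n ⊗ N_A + N_Q ⊗ J_m) ^ k = 0`. -/
theorem kronecker_sum_nilpotent {m n k : ℕ} (hk : 1 ≤ k)
    (NA : Matrix (Fin m) (Fin m) ℝ) (NQ : Matrix (Fin n) (Fin n) ℝ)
    (hArow : ∀ i, ∑ j, NA i j = 0) (hAcol : ∀ j, ∑ i, NA i j = 0)
    (hQrow : ∀ i, ∑ j, NQ i j = 0) (hQcol : ∀ j, ∑ i, NQ i j = 0)
    (hAnil : NA ^ k = 0) (hQnil : NQ ^ k = 0)
    (Jn : Matrix (Fin n) (Fin n) ℝ) (hJn : Jn = Matrix.of fun _ _ => (1 : ℝ))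
    (Jm : Matrix (Fin m) (Fin m) ℝ) (hJm : Jm = Matrix.of fun _ _ => (1 : ℝ)) :
    (Jn ⊗ₖ NA + NQ ⊗ₖ Jm) ^ k = 0 := by
  subst hJn
  -- The all-ones matrix is definitionally both `replicateCol _ 1` and `replicateRow _ 1`.
  exact kronecker_sum_nilpotent_general (.inl (replicateCol_mul_eq_zero_of_sum_col_eq_zero 1 hQcol))
    (.inl (mul_replicateRow_eq_zero_of_sum_row_eq_zero 1 hQrow)) hAnil hQnil
end

section
/- Let sud4a be the 4×4 rational matrix [[1,2,3,4],[3,4,1,2],[4,3,2,1],[2,1,4,3]]. Then the matrix rank of sud4a is 3, the rank of sud4a² is 2, and the rank of sud4a³ is 1. -/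
open Matrix

/-- The diagonal Latin square `sud4a`, as a rational matrix. -/
def sud4a : Matrix (Fin 4) (Fin 4) ℚ :=
  !![1, 2, 3, 4;
     3, 4, 1, 2;
     4, 3, 2, 1;
     2, 1, 4, 3]

/-!
The vector `(1, -1, 0, 0)` starts a Jordan chain of length three for the eigenvalue `0`, so the
ranks of the powers `0, 1, 2, 3` of `sud4a` are strictly decreasing from `4`. The constant line sum
makes `(1, 1, 1, 1)` an eigenvector for `10`, so they stay positive, which leaves only `4, 3, 2, 1`.
-/

section Rank

variable {l m n K : Type*} [Fintype m] [Fintype n] [Field K]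

theorem rank_mul_lt_rank_of_mulVec_ne_zero (B : Matrix l m K) {A : Matrix m n K} {v : n → K}
    (hA : A *ᵥ v ≠ 0) (hBA : B *ᵥ (A *ᵥ v) = 0) : (B * A).rank < A.rank := by
  have ker_le : LinearMap.ker A.mulVecLin ≤ LinearMap.ker (B * A).mulVecLin := by
    rw [mulVecLin_mul]
    exact LinearMap.ker_le_ker_comp _ _
  have ker_lt : LinearMap.ker A.mulVecLin < LinearMap.ker (B * A).mulVecLin :=
    SetLike.lt_iff_le_and_exists.2 ⟨ker_le, v, by simpa using hBA, hA⟩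
  have finrank_ker_lt := Submodule.finrank_lt_finrank_of_lt ker_lt
  have rank_nullity_A := A.mulVecLin.finrank_range_add_finrank_ker
  have rank_nullity_BA := (B * A).mulVecLin.finrank_range_add_finrank_ker
  unfold Matrix.rank
  lia

theorem rank_pow_succ_lt_rank_pow [DecidableEq n] {A : Matrix n n K} {v : n → K} {j k : ℕ}
    (hk : A ^ k *ᵥ v ≠ 0) (hk' : A ^ (k + 1) *ᵥ v = 0) (hjk : j ≤ k) :
    (A ^ (j + 1)).rank < (A ^ j).rank := by
  have pow_mulVec_pow_mulVec : A ^ j *ᵥ (A ^ (k - j) *ᵥ v) = A ^ k *ᵥ v := by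
    rw [mulVec_mulVec, ← pow_add, Nat.add_sub_cancel' hjk]
  rw [pow_succ']
  refine rank_mul_lt_rank_of_mulVec_ne_zero A (v := A ^ (k - j) *ᵥ v) ?_ ?_
  · rwa [pow_mulVec_pow_mulVec]
  · rwa [pow_mulVec_pow_mulVec, mulVec_mulVec, ← pow_succ']

end Rank

theorem rank_pos_of_mulVec_ne_zero {m n R : Type*} [Fintype n] [CommRing R] [IsDomain R]
    {A : Matrix m n R} {v : n → R} (hA : A *ᵥ v ≠ 0) : 0 < A.rank := by
  refine Submodule.one_le_finrank_iff.2 fun range_eq_bot => hA ?_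
  exact (Submodule.eq_bot_iff _).1 range_eq_bot _ ⟨v, rfl⟩

theorem pow_mulVec_of_mulVec_eq_smul {n R : Type*} [Fintype n] [DecidableEq n] [CommSemiring R]
    {A : Matrix n n R} {v : n → R} {μ : R} (h : A *ᵥ v = μ • v) (k : ℕ) :
    A ^ k *ᵥ v = μ ^ k • v := by
  induction k with
  | zero => simp
  | succ k ih => rw [pow_succ, ← mulVec_mulVec, h, mulVec_smul, ih, smul_smul, pow_succ']

theorem sud4a_mulVec (a b c d : ℚ) :
    sud4a *ᵥ ![a, b, c, d] =
      ![a + 2 * b + 3 * c + 4 * d,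
        3 * a + 4 * b + c + 2 * d,
        4 * a + 3 * b + 2 * c + d,
        2 * a + b + 4 * c + 3 * d] := by
  ext i
  fin_cases i <;> simp [sud4a, mulVec, dotProduct, Fin.sum_univ_four]

theorem sud4a_mulVec_ones : sud4a *ᵥ ![1, 1, 1, 1] = (10 : ℚ) • ![1, 1, 1, 1] := by
  norm_num [sud4a_mulVec]

theorem sud4a_sq_mulVec : sud4a ^ 2 *ᵥ ![1, -1, 0, 0] = ![4, -4, -4, 4] := by
  calc sud4a ^ 2 *ᵥ ![1, -1, 0, 0]
    _ = sud4a *ᵥ (sud4a *ᵥ ![1, -1, 0, 0]) := by rw [mulVec_mulVec, sq]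
    _ = sud4a *ᵥ ![-1, -1, 1, 1] := by norm_num [sud4a_mulVec]
    _ = ![4, -4, -4, 4] := by norm_num [sud4a_mulVec]

theorem sud4a_cube_mulVec : sud4a ^ 3 *ᵥ ![1, -1, 0, 0] = 0 := by
  calc sud4a ^ 3 *ᵥ ![1, -1, 0, 0]
    _ = sud4a *ᵥ ![4, -4, -4, 4] := by rw [pow_succ', ← mulVec_mulVec, sud4a_sq_mulVec]
    _ = 0 := by norm_num [sud4a_mulVec, eq_iff_true_of_subsingleton]

/-- the ranks of `sud4a`, `sud4a²` and `sud4a³` are 3, 2, 1. -/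
theorem sud4a_ranks :
    sud4a.rank = 3 ∧ (sud4a ^ 2).rank = 2 ∧ (sud4a ^ 3).rank = 1 := by
  have sq_mulVec_ne_zero : sud4a ^ 2 *ᵥ ![1, -1, 0, 0] ≠ 0 := by simp [sud4a_sq_mulVec]
  have rank_lt {j : ℕ} : j ≤ 2 → (sud4a ^ (j + 1)).rank < (sud4a ^ j).rank :=
    rank_pow_succ_lt_rank_pow sq_mulVec_ne_zero sud4a_cube_mulVec
  have rank_lt_four : sud4a.rank < 4 := by simpa using rank_lt (j := 0)
  have rank_sq_lt : (sud4a ^ 2).rank < sud4a.rank := by simpa using rank_lt (j := 1)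
  have rank_cube_lt : (sud4a ^ 3).rank < (sud4a ^ 2).rank := rank_lt le_rfl
  have rank_cube_pos : 0 < (sud4a ^ 3).rank := by
    refine rank_pos_of_mulVec_ne_zero (v := ![1, 1, 1, 1]) ?_
    simp [pow_mulVec_of_mulVec_eq_smul sud4a_mulVec_ones]
  lia
end

section
/- Let f360 be the 4×4 integer matrix [[2,11,7,14],[13,8,12,1],[16,5,9,4],[3,10,6,15]]. Then the characteristic polynomial of f360 equals X^4 - 34·X^3, and f360³ = 9826•J₄ where J₄ is the 4×4 all-ones matrix; hence all powers f360ᵖ with p ≥ 3 are constant matrices. -/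
open Matrix Polynomial

/-- The associative magic square `f360`, as an integer matrix. -/
def f360 : Matrix (Fin 4) (Fin 4) ℤ :=
  !![2, 11, 7, 14;
     13, 8, 12, 1;
     16, 5, 9, 4;
     3, 10, 6, 15]

/-- The 4×4 all-ones matrix. -/
def J4 : Matrix (Fin 4) (Fin 4) ℤ := Matrix.of fun _ _ => 1

/-! The all-ones vector `u` satisfies `f360 *ᵥ u = 34 • u`, because every row sums to `34`. For any
`v` with `u ⬝ᵥ v = 34`, write `f360 = B + u vᵀ`; then `B *ᵥ u = 0`, so
`(X - B) (X - u vᵀ) = X (X - f360)`. Since `B ^ 4 = B * f360 ^ 3` and the columns of `f360 ^ 3` are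
multiples of `u`, `B` is nilpotent with characteristic polynomial `X ^ 4`, and taking determinants
leaves `f360` with the characteristic polynomial of the rank-one matrix `u vᵀ`. -/

theorem pow_mul_eq_smul_of_mul_eq_smul {R A : Type*} [Monoid R] [Monoid A] [MulAction R A]
    [SMulCommClass R A A] {a b : A} {r : R} (h : a * b = r • b) (k : ℕ) :
    a ^ k * b = r ^ k • b := by
  induction k with
  | zero => simp
  | succ k ih => rw [pow_succ, mul_assoc, h, mul_smul_comm, ih, smul_smul, ← pow_succ']

theorem pow_succ_eq_mul_add_pow_of_mul_eq_zero {A : Type*} [Semiring A] {b c : A}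
    (h : b * c = 0) (k : ℕ) : b ^ (k + 1) = b * (b + c) ^ k := by
  induction k with
  | zero => simp
  | succ k ih =>
    have hc : b ^ (k + 1) * c = 0 := by rw [pow_succ, mul_assoc, h, mul_zero]
    rw [pow_succ (b + c), ← mul_assoc, ← ih, mul_add, hc, add_zero, ← pow_succ]

section Charpoly

variable {n R : Type*} [Fintype n] [DecidableEq n] [CommRing R]

theorem charmatrix_mul_charmatrix_of_mul_eq_zero {B D : Matrix n n R} (h : B * D = 0) :
    B.charmatrix * D.charmatrix = (X : R[X]) • (B + D).charmatrix := by
  have hmap : C.mapMatrix B * C.mapMatrix D = 0 := by rw [← map_mul, h, map_zero]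
  simp only [charmatrix, map_add, scalar_apply, ← smul_one_eq_diagonal, sub_mul, mul_sub, hmap,
    smul_mul_assoc, mul_smul_comm, one_mul, mul_one, smul_sub, smul_add]
  abel

theorem charpoly_mul_charpoly_of_mul_eq_zero {B D : Matrix n n R} (h : B * D = 0) :
    B.charpoly * D.charpoly = X ^ Fintype.card n * (B + D).charpoly := by
  simp only [charpoly, ← det_mul, charmatrix_mul_charmatrix_of_mul_eq_zero h, det_smul]

variable [IsReduced R]

theorem charpoly_eq_X_pow_card_of_isNilpotent {B : Matrix n n R} (hB : IsNilpotent B) :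
    B.charpoly = X ^ Fintype.card n :=
  sub_eq_zero.mp <| Polynomial.ext fun i =>
    (Polynomial.isNilpotent_iff.mp (isNilpotent_charpoly_sub_pow_of_isNilpotent hB) i).eq_zero

theorem charpoly_add_of_isNilpotent_of_mul_eq_zero {B D : Matrix n n R} (hB : IsNilpotent B)
    (h : B * D = 0) : (B + D).charpoly = D.charpoly := by
  have hmul := charpoly_mul_charpoly_of_mul_eq_zero h
  rw [charpoly_eq_X_pow_card_of_isNilpotent hB] at hmul
  exact ((isRegular_X_pow _).left hmul).symm

theorem charpoly_of_pow_eq_vecMulVec {A : Matrix n n R} {u v w : n → R} {m : ℕ}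
    (hu : A *ᵥ u = (u ⬝ᵥ v) • u) (hpow : A ^ m = vecMulVec u w) :
    A.charpoly = X ^ Fintype.card n - (u ⬝ᵥ v) • X ^ (Fintype.card n - 1) := by
  obtain ⟨B, rfl⟩ : ∃ B, A = B + vecMulVec u v := ⟨A - vecMulVec u v, (sub_add_cancel _ _).symm⟩
  have hBu : B *ᵥ u = 0 := by
    simpa [add_mulVec, vecMulVec_mulVec, dotProduct_comm v u] using hu
  have hB_mul (x : n → R) : B * vecMulVec u x = 0 := by
    rw [mul_vecMulVec, hBu, zero_vecMulVec]
  have hB : IsNilpotent B :=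
    ⟨m + 1, by rw [pow_succ_eq_mul_add_pow_of_mul_eq_zero (hB_mul v), hpow, hB_mul]⟩
  rw [charpoly_add_of_isNilpotent_of_mul_eq_zero hB (hB_mul v), charpoly_vecMulVec]

end Charpoly

theorem J4_eq_vecMulVec : J4 = vecMulVec 1 1 := by
  decide

theorem f360_mulVec_one : f360 *ᵥ 1 = (34 : ℤ) • 1 := by
  decide

theorem f360_mul_J4 : f360 * J4 = (34 : ℤ) • J4 := by
  rw [J4_eq_vecMulVec, mul_vecMulVec, f360_mulVec_one, smul_vecMulVec]

theorem f360_pow_three : f360 ^ 3 = (9826 : ℤ) • J4 := by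
  decide

theorem f360_charpoly : f360.charpoly = X ^ 4 - C 34 * X ^ 3 := by
  have hdot : (1 : Fin 4 → ℤ) ⬝ᵥ Pi.single 0 34 = 34 := by simp
  have hrow : f360 *ᵥ 1 = ((1 : Fin 4 → ℤ) ⬝ᵥ Pi.single 0 34) • 1 := by
    rw [hdot, f360_mulVec_one]
  have hpow : f360 ^ 3 = vecMulVec 1 ((9826 : ℤ) • 1) := by
    rw [f360_pow_three, J4_eq_vecMulVec, vecMulVec_smul]
  have h := charpoly_of_pow_eq_vecMulVec hrow hpow
  rwa [hdot, Fintype.card_fin, smul_eq_C_mul] at h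

/-- `f360` has characteristic polynomial `X^4 - 34·X^3`,
`f360³ = 9826 • J₄`, hence all powers `f360ᵖ` with `p ≥ 3` are constant. -/
theorem f360_charpoly_and_cube :
    f360.charpoly = X ^ 4 - C 34 * X ^ 3 ∧
    f360 ^ 3 = (9826 : ℤ) • J4 ∧
    ∀ p : ℕ, 3 ≤ p → ∃ c : ℤ, f360 ^ p = c • J4 := by
  refine ⟨f360_charpoly, f360_pow_three, fun p hp => ⟨34 ^ (p - 3) * 9826, ?_⟩⟩
  calc f360 ^ p = f360 ^ (p - 3) * f360 ^ 3 := by rw [← pow_add, Nat.sub_add_cancel hp]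
    _ = (9826 : ℤ) • (f360 ^ (p - 3) * J4) := by rw [f360_pow_three, mul_smul_comm]
    _ = (34 ^ (p - 3) * 9826 : ℤ) • J4 := by
      rw [pow_mul_eq_smul_of_mul_eq_smul f360_mul_J4, smul_smul, mul_comm]
end
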